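/- arXiv:2412.00295 — 2 statements merged into one kernel-verified Lean document; each statement's English description precedes it below -/
import Mathlib

section
/- The trace of X_ρ equals n·λ, and consequently the eigenspace of X_ρ for the eigenvalue λ has dimension exactly n (equivalently, the rank of X_ρ is n). -/
open Matrix Finset

/-- Integer power of a matrix `U`, where negative powers are interpreted as
powers of the conjugate transpose `Uᴴ`. -/
noncomputable def zpowU {n : ℕ} (U : Matrix (Fin n) (Fin n) ℂ) : ℤ → Matrix (Fin n) (Fin n) ℂ :=
  fun z => if 0 ≤ z then U ^ z.toNat else Uᴴ ^ (-z).toNat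

/-- The τn×τn block matrix `X_ρ` whose (i,j)-th n×n block (0-based `i, j`) is
`ρ^(i+j) · U^(j-i)`. -/
noncomputable def Xmat {n : ℕ} (τ : ℕ) (ρ : ℝ) (U : Matrix (Fin n) (Fin n) ℂ) :
    Matrix (Fin τ × Fin n) (Fin τ × Fin n) ℂ :=
  fun p q => (ρ : ℂ) ^ ((p.1 : ℕ) + (q.1 : ℕ)) * zpowU U ((q.1 : ℤ) - (p.1 : ℤ)) p.2 q.2

theorem zpowU_aux {n : ℕ} (U : Matrix (Fin n) (Fin n) ℂ) (hU₁ : Uᴴ * U = 1) (i j : ℕ) :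
    zpowU U ((j : ℤ) - (i : ℤ)) = Uᴴ ^ i * U ^ j := by
  have key : ∀ k : ℕ, Uᴴ ^ k * U ^ k = 1 := by
    intro k
    induction k with
    | zero => simp
    | succ k ih =>
      rw [pow_succ, pow_succ', Matrix.mul_assoc, ← Matrix.mul_assoc Uᴴ U, hU₁, Matrix.one_mul, ih]
  unfold zpowU
  split_ifs with h
  · obtain ⟨d, rfl⟩ := Nat.exists_eq_add_of_le (show i ≤ j by omega)
    have : ((((i + d : ℕ) : ℤ)) - (i : ℤ)).toNat = d := by omega
    rw [this, pow_add, ← Matrix.mul_assoc, key, Matrix.one_mul]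
  · obtain ⟨d, rfl⟩ := Nat.exists_eq_add_of_le (show j ≤ i by omega)
    have : (-((j : ℤ) - ((j + d : ℕ) : ℤ))).toNat = d := by omega
    rw [this, add_comm j d, pow_add, Matrix.mul_assoc, key, Matrix.mul_one]

/-- The factor `V` with `X = V Vᴴ`. -/
noncomputable def Vmat {n : ℕ} (τ : ℕ) (ρ : ℝ) (U : Matrix (Fin n) (Fin n) ℂ) :
    Matrix (Fin τ × Fin n) (Fin n) ℂ :=
  fun p b => (ρ : ℂ) ^ (p.1 : ℕ) * (Uᴴ ^ (p.1 : ℕ)) p.2 b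

theorem Vmat_conj {n : ℕ} (τ : ℕ) (ρ : ℝ) (U : Matrix (Fin n) (Fin n) ℂ)
    (b : Fin n) (p : Fin τ × Fin n) :
    (Vmat τ ρ U)ᴴ b p = (ρ : ℂ) ^ (p.1 : ℕ) * (U ^ (p.1 : ℕ)) b p.2 := by
  have h : U ^ (p.1 : ℕ) = (Uᴴ ^ (p.1 : ℕ))ᴴ := by
    rw [Matrix.conjTranspose_pow, Matrix.conjTranspose_conjTranspose]
  rw [h]
  simp only [Matrix.conjTranspose_apply, Vmat, star_mul', star_pow]
  simp

theorem Xmat_eq {n : ℕ} (τ : ℕ) (ρ : ℝ) (U : Matrix (Fin n) (Fin n) ℂ) (hU₁ : Uᴴ * U = 1) :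
    Xmat τ ρ U = Vmat τ ρ U * (Vmat τ ρ U)ᴴ := by
  ext p q
  rw [Matrix.mul_apply]
  simp only [Vmat_conj]
  simp only [Xmat, Vmat]
  rw [zpowU_aux U hU₁, Matrix.mul_apply, Finset.mul_sum]
  refine Finset.sum_congr rfl fun b _ => ?_
  ring

theorem Vmat_gram {n : ℕ} (τ : ℕ) (ρ : ℝ) (U : Matrix (Fin n) (Fin n) ℂ) (hU₂ : U * Uᴴ = 1) :
    (Vmat τ ρ U)ᴴ * Vmat τ ρ U =
      (((∑ k ∈ Finset.range τ, ρ ^ (2 * k) : ℝ)) : ℂ) • (1 : Matrix (Fin n) (Fin n) ℂ) := by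
  have key : ∀ k : ℕ, U ^ k * Uᴴ ^ k = 1 := by
    intro k
    induction k with
    | zero => simp
    | succ k ih =>
      rw [pow_succ, pow_succ', Matrix.mul_assoc, ← Matrix.mul_assoc U Uᴴ, hU₂, Matrix.one_mul, ih]
  ext a b
  rw [Matrix.mul_apply, Fintype.sum_prod_type]
  simp only [Vmat_conj]
  simp only [Vmat]
  have : ∀ i : Fin τ, ∑ c : Fin n, (ρ : ℂ) ^ (i : ℕ) * (U ^ (i : ℕ)) a c *
      ((ρ : ℂ) ^ (i : ℕ) * (Uᴴ ^ (i : ℕ)) c b) =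
      (ρ : ℂ) ^ (2 * (i : ℕ)) * (1 : Matrix (Fin n) (Fin n) ℂ) a b := by
    intro i
    rw [← key i, Matrix.mul_apply, Finset.mul_sum]
    refine Finset.sum_congr rfl fun c _ => ?_
    ring
  simp only [this]
  rw [← Finset.sum_mul, Fin.sum_univ_eq_sum_range (fun k => (ρ : ℂ) ^ (2 * k))]
  simp

/-- the trace of `X_ρ` equals `n·λ`, the eigenspace of `X_ρ` for the
eigenvalue `λ` has dimension exactly `n`, and the rank of `X_ρ` is `n`. -/
theorem stmt_2 {n τ : ℕ} (hn : 0 < n) (hτ : 0 < τ)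
    (U : Matrix (Fin n) (Fin n) ℂ) (hU₁ : Uᴴ * U = 1) (hU₂ : U * Uᴴ = 1)
    (ρ : ℝ) (hρ : ρ ∈ Set.Ioc (0 : ℝ) 1) :
    (Xmat τ ρ U).trace = (n : ℂ) * (((∑ k ∈ Finset.range τ, ρ ^ (2 * k) : ℝ)) : ℂ) ∧
    Module.finrank ℂ
      (Module.End.eigenspace (Matrix.mulVecLin (Xmat τ ρ U))
        (((∑ k ∈ Finset.range τ, ρ ^ (2 * k) : ℝ)) : ℂ)) = n ∧
    (Xmat τ ρ U).rank = n := by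
  have hl : (((∑ k ∈ Finset.range τ, ρ ^ (2 * k) : ℝ)) : ℂ) ≠ 0 := by
    rw [Ne, Complex.ofReal_eq_zero]
    have h0 : 0 < ρ := hρ.1
    exact (Finset.sum_pos (fun k _ => by positivity) ⟨0, by simpa using hτ⟩).ne'
  have hX := Xmat_eq τ ρ U hU₁
  have hG := Vmat_gram τ ρ U hU₂
  generalize (((∑ k ∈ Finset.range τ, ρ ^ (2 * k) : ℝ)) : ℂ) = l at *
  have hr : (Xmat τ ρ U).rank = n := by
    open scoped ComplexOrder in
    rw [hX, Matrix.rank_self_mul_conjTranspose, ← Matrix.rank_conjTranspose_mul_self, hG,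
      Matrix.rank_of_isUnit]
    · simp
    · exact (Matrix.isUnit_iff_isUnit_det _).2 (by simp [Matrix.det_smul, hl])
  have hXX : Xmat τ ρ U * Xmat τ ρ U = l • Xmat τ ρ U := by
    rw [hX, Matrix.mul_assoc, ← Matrix.mul_assoc (Vmat τ ρ U)ᴴ, hG]
    simp
  refine ⟨?_, ?_, hr⟩
  · rw [hX, Matrix.trace_mul_comm, hG]
    simp [mul_comm]
  · have : Module.End.eigenspace (Matrix.mulVecLin (Xmat τ ρ U)) l =
        LinearMap.range (Matrix.mulVecLin (Xmat τ ρ U)) := by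
      ext v
      rw [Module.End.mem_eigenspace_iff, LinearMap.mem_range]
      constructor
      · intro h
        exact ⟨l⁻¹ • v, by rw [map_smul, h, smul_smul, inv_mul_cancel₀ hl, one_smul]⟩
      · rintro ⟨w, rfl⟩
        simp only [Matrix.mulVecLin_apply, Matrix.mulVec_mulVec, hXX, Matrix.smul_mulVec]
    rw [this]
    exact hr
end

section
/- If the dynamical coupling is the n×n cyclic shift permutation matrix C and the past horizon is τ = n, then there exists an orthonormal basis of ℝ^n consisting of eigenvectors of the metric tensor Q, of which exactly ⌈n/2⌉ are symmetric (Jv = v) and exactly ⌊n/2⌋ are skew-symmetric (Jv = −v), where J is the n×n exchange matrix. -/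
open Matrix Finset

/-- The n×n real cyclic shift permutation matrix: `C e_k = e_{k+1 mod n}`,
i.e. `C_{ij} = 1` iff `i ≡ j + 1 (mod n)`. -/
def cycCR (n : ℕ) : Matrix (Fin n) (Fin n) ℝ :=
  fun i j => if (i : ℕ) = ((j : ℕ) + 1) % n then 1 else 0

/-- The metric tensor `Q` with cyclic-shift coupling and past horizon `τ = n`
(0-based indices): `Q_{ij} = wᵀ (Cᵀ)^i C^j w`. -/
noncomputable def Qcyc (n : ℕ) (w : Fin n → ℝ) : Matrix (Fin n) (Fin n) ℝ :=
  fun i j => w ⬝ᵥ (((cycCR n)ᵀ ^ (i : ℕ) * cycCR n ^ (j : ℕ)).mulVec w)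

/-- The n×n exchange matrix `J`: ones on the antidiagonal, zeros elsewhere. -/
def exchMat (n : ℕ) : Matrix (Fin n) (Fin n) ℝ :=
  fun i j => if j = i.rev then 1 else 0

lemma exch_mulVec (n : ℕ) (v : Fin n → ℝ) (i : Fin n) :
    (exchMat n).mulVec v i = v i.rev := by
  simp [Matrix.mulVec, dotProduct, exchMat]

lemma cyc_orth (n : ℕ) (hn : 0 < n) : (cycCR n)ᵀ * cycCR n = 1 := by
  ext i j
  rw [Matrix.mul_apply]
  simp only [Matrix.transpose_apply, cycCR]
  have hi := i.isLt
  have hj := j.isLt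
  rw [Finset.sum_eq_single (⟨(i.val + 1) % n, Nat.mod_lt _ hn⟩ : Fin n)]
  · simp only [if_true, one_mul, Matrix.one_apply]
    congr 1
    apply propext
    constructor
    · intro h
      apply Fin.ext
      have h2 : i.val ≡ j.val [MOD n] := Nat.ModEq.add_right_cancel' 1 h
      exact Nat.ModEq.eq_of_lt_of_lt h2 hi hj
    · rintro rfl
      rfl
  · intro b _ hb
    rw [if_neg, zero_mul]
    intro h
    exact hb (Fin.ext h)
  · simp

lemma cyc_pow (n : ℕ) (hn : 0 < n) (a d : ℕ) :
    (cycCR n)ᵀ ^ a * cycCR n ^ (a + d) = cycCR n ^ d := by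
  induction a with
  | zero => simp
  | succ a ih =>
    rw [pow_succ, show a + 1 + d = (a + d) + 1 by ring, pow_succ' (cycCR n), mul_assoc,
      ← mul_assoc ((cycCR n)ᵀ) (cycCR n), cyc_orth n hn, one_mul, ih]

lemma Q_symm (n : ℕ) (w : Fin n → ℝ) (i j : Fin n) : Qcyc n w i j = Qcyc n w j i := by
  unfold Qcyc
  rw [Matrix.dotProduct_mulVec, dotProduct_comm, ← Matrix.mulVec_transpose,
    Matrix.transpose_mul, Matrix.transpose_pow, Matrix.transpose_pow, Matrix.transpose_transpose]

lemma Q_le (n : ℕ) (hn : 0 < n) (w : Fin n → ℝ) (i j : Fin n) (h : i ≤ j) :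
    Qcyc n w i j = w ⬝ᵥ ((cycCR n ^ (j.val - i.val)).mulVec w) := by
  unfold Qcyc
  have h' : i.val ≤ j.val := h
  rw [← cyc_pow n hn i.val (j.val - i.val), Nat.add_sub_cancel' h']

lemma Q_rev_le (n : ℕ) (hn : 0 < n) (w : Fin n → ℝ) (i j : Fin n) (h : i ≤ j) :
    Qcyc n w i.rev j.rev = Qcyc n w i j := by
  rw [Q_symm, Q_le n hn w _ _ (Fin.rev_le_rev.mpr h), Q_le n hn w _ _ h]
  have h' : i.val ≤ j.val := h
  have : (i.rev.val - j.rev.val) = j.val - i.val := by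
    simp only [Fin.val_rev]; omega
  rw [this]

lemma Q_rev (n : ℕ) (hn : 0 < n) (w : Fin n → ℝ) (i j : Fin n) :
    Qcyc n w i.rev j.rev = Qcyc n w i j := by
  rcases le_total i j with h | h
  · exact Q_rev_le n hn w i j h
  · rw [Q_symm, Q_rev_le n hn w j i h, Q_symm]

lemma Q_comm (n : ℕ) (hn : 0 < n) (w v : Fin n → ℝ) :
    (Qcyc n w).mulVec ((exchMat n).mulVec v) = (exchMat n).mulVec ((Qcyc n w).mulVec v) := by
  ext i
  rw [exch_mulVec]
  simp only [Matrix.mulVec, dotProduct]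
  rw [← Equiv.sum_comp Fin.revPerm]
  refine Finset.sum_congr rfl fun k _ => ?_
  have := exch_mulVec n v k.rev
  simp only [Matrix.mulVec, dotProduct] at this
  rw [Fin.revPerm_apply, this, Fin.rev_rev, ← Q_rev n hn w i k.rev, Fin.rev_rev]

lemma exch_exch (n : ℕ) (v : Fin n → ℝ) :
    (exchMat n).mulVec ((exchMat n).mulVec v) = v := by
  ext i
  rw [exch_mulVec, exch_mulVec, Fin.rev_rev]

lemma exch_trace (n : ℕ) : (exchMat n).trace = ((n % 2 : ℕ) : ℝ) := by
  simp only [Matrix.trace, Matrix.diag, exchMat]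
  rcases Nat.even_or_odd' n with ⟨k, hk | hk⟩
  · rw [Finset.sum_eq_zero]
    · simp [hk]
    · intro i _
      rw [if_neg]
      intro h
      have := congrArg Fin.val h
      have := i.isLt
      simp only [Fin.val_rev] at *
      omega
  · rw [Finset.sum_eq_single (⟨k, by omega⟩ : Fin n)]
    · rw [if_pos]
      · have : n % 2 = 1 := by omega
        simp [this]
      · apply Fin.ext
        simp only [Fin.val_rev]
        omega
    · intro i _ hi
      rw [if_neg]
      intro h
      apply hi
      have := congrArg Fin.val h
      have := i.isLt
      apply Fin.ext
      simp only [Fin.val_rev] at *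
      omega
    · simp

lemma exists_good (n : ℕ) (A : Matrix (Fin n) (Fin n) ℝ) :
    ∃ t : ℝ, ∀ (a b : ℝ) (p m : Fin n → ℝ), p ≠ 0 → m ≠ 0 → A.mulVec p = a • p →
      A.mulVec m = b • m → b - a ≠ 2 * t := by
  have hf : (Set.Finite {a : ℝ | Module.End.HasEigenvalue (Matrix.toLin' A) a}) :=
    Module.End.finite_hasEigenvalue _
  obtain ⟨t, ht⟩ := ((hf.prod hf).image (fun x : ℝ × ℝ => (x.2 - x.1) / 2)).exists_notMem
  refine ⟨t, fun a b p m hp hm h1 h2 h => ht ⟨(a, b), ⟨?_, ?_⟩, ?_⟩⟩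
  · exact Module.End.hasEigenvalue_of_hasEigenvector
      (x := p) ⟨Module.End.mem_eigenspace_iff.mpr (by simpa using h1), hp⟩
  · exact Module.End.hasEigenvalue_of_hasEigenvector
      (x := m) ⟨Module.End.mem_eigenspace_iff.mpr (by simpa using h2), hm⟩
  · simp only; linarith

/-- with cyclic-shift coupling and `τ = n`, there is an orthonormal
basis of eigenvectors of `Q` with exactly `⌈n/2⌉` symmetric ones (`Jv = v`) and
exactly `⌊n/2⌋` skew-symmetric ones (`Jv = -v`). -/
theorem stmt_18 (n : ℕ) (hn : 0 < n) (w : Fin n → ℝ) :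
    ∃ (v : Fin n → Fin n → ℝ) (μ : Fin n → ℝ) (S : Finset (Fin n)),
      (∀ i j : Fin n, v i ⬝ᵥ v j = if i = j then 1 else 0) ∧
      (∀ i : Fin n, (Qcyc n w).mulVec (v i) = μ i • v i) ∧
      S.card = (n + 1) / 2 ∧
      (∀ i ∈ S, (exchMat n).mulVec (v i) = v i) ∧
      (∀ i ∉ S, (exchMat n).mulVec (v i) = -(v i)) := by
  classical
  obtain ⟨t, ht⟩ := exists_good n (Qcyc n w)
  have hA : (Qcyc n w + t • exchMat n).IsHermitian := by
    ext i j
    simp only [Matrix.conjTranspose_apply, Matrix.add_apply, Matrix.smul_apply, star_trivial,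
      Q_symm n w j i, exchMat]
    congr 3
    apply propext
    constructor
    · rintro rfl
      simp
    · rintro rfl
      simp
  set v : Fin n → Fin n → ℝ := fun i => (hA.eigenvectorBasis i).ofLp with hv
  have hev : ∀ i, (Qcyc n w).mulVec (v i) + t • (exchMat n).mulVec (v i)
      = hA.eigenvalues i • v i := by
    intro i
    have := hA.mulVec_eigenvectorBasis i
    rw [Matrix.add_mulVec, Matrix.smul_mulVec] at this
    exact this
  have hon : ∀ i j : Fin n, v i ⬝ᵥ v j = if i = j then 1 else 0 := by
    intro i j
    have := orthonormal_iff_ite.mp hA.eigenvectorBasis.orthonormal i j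
    rw [← this, EuclideanSpace.inner_eq_star_dotProduct, dotProduct_comm]
    simp [hv]
  have hdich : ∀ i, (exchMat n).mulVec (v i) = v i ∨ (exchMat n).mulVec (v i) = -(v i) := by
    intro i
    by_contra hcon
    rw [not_or] at hcon
    have e1 := hev i
    have e2 := congrArg (exchMat n).mulVec e1
    rw [Matrix.mulVec_add, Matrix.mulVec_smul, Matrix.mulVec_smul, exch_exch,
      ← Q_comm n hn] at e2
    refine ht (hA.eigenvalues i - t) (hA.eigenvalues i + t)
      (v i + (exchMat n).mulVec (v i)) (v i - (exchMat n).mulVec (v i)) ?_ ?_ ?_ ?_ (by ring)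
    · intro h
      exact hcon.2 (eq_neg_of_add_eq_zero_right h)
    · intro h
      exact hcon.1 (sub_eq_zero.mp h).symm
    · rw [Matrix.mulVec_add, eq_sub_of_add_eq e1, eq_sub_of_add_eq e2]
      module
    · rw [Matrix.mulVec_sub, eq_sub_of_add_eq e1, eq_sub_of_add_eq e2]
      module
  set S : Finset (Fin n) := Finset.univ.filter fun i => (exchMat n).mulVec (v i) = v i with hS
  have hin : ∀ i ∈ S, (exchMat n).mulVec (v i) = v i := fun i hi => (Finset.mem_filter.mp hi).2
  have hout : ∀ i ∉ S, (exchMat n).mulVec (v i) = -(v i) := fun i hi =>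
    (hdich i).resolve_left fun h => hi (Finset.mem_filter.mpr ⟨Finset.mem_univ _, h⟩)
  refine ⟨v, fun i => if i ∈ S then hA.eigenvalues i - t else hA.eigenvalues i + t, S,
    hon, ?_, ?_, hin, hout⟩
  · intro i
    have e1 := hev i
    by_cases h : i ∈ S
    · rw [hin i h] at e1
      simp only [h, if_true]
      rw [eq_sub_of_add_eq e1]
      module
    · rw [hout i h] at e1
      simp only [h, if_false]
      rw [eq_sub_of_add_eq e1]
      module
  · have hV : (Matrix.of v) * (Matrix.of v)ᵀ = 1 := by
      ext i j
      rw [Matrix.one_apply, ← hon i j]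
      rfl
    have hV' : (Matrix.of v)ᵀ * (Matrix.of v) = 1 := mul_eq_one_comm.mp hV
    have htr : (Matrix.of v * (exchMat n * (Matrix.of v)ᵀ)).trace = (exchMat n).trace := by
      rw [Matrix.trace_mul_comm, mul_assoc, hV', mul_one]
    have hsum : (Matrix.of v * (exchMat n * (Matrix.of v)ᵀ)).trace
        = ∑ i, if i ∈ S then (1 : ℝ) else -1 := by
      refine Finset.sum_congr rfl fun i _ => ?_
      have : (Matrix.of v * (exchMat n * (Matrix.of v)ᵀ)).diag i
          = v i ⬝ᵥ (exchMat n).mulVec (v i) := rfl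
      rw [this]
      split_ifs with h
      · rw [hin i h, hon, if_pos rfl]
      · rw [hout i h, dotProduct_neg, hon, if_pos rfl]
    rw [htr, exch_trace] at hsum
    have h3 : (∑ i, if i ∈ S then (1 : ℝ) else -1) = 2 * (S.card : ℝ) - n := by
      have : ∀ i : Fin n, (if i ∈ S then (1 : ℝ) else -1) = 2 * (if i ∈ S then 1 else 0) - 1 := by
        intro i
        split_ifs <;> norm_num
      simp only [this, Finset.sum_sub_distrib, ← Finset.mul_sum]
      simp
    rw [h3] at hsum
    have h4 : n % 2 + n = 2 * S.card := by
      have : (((n % 2 + n : ℕ)) : ℝ) = ((2 * S.card : ℕ) : ℝ) := by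
        push_cast
        linarith
      exact_mod_cast this
    omega
end
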